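/- Let n ≥ 2 and let f be the symmetric quartic form on ℝⁿ determined by real coefficients a, b, c, d, e. For r ∈ {1, …, n−1}, set s = n − r and define A_r = r[a + (b+c)r + dr² + er³], B_r = rs(b + 2dr + 4er²), C_r = rs[2c + d(r+s) + 6ers], D_r = rs(b + 2ds + 4es²), E_r = s[a + (b+c)s + ds² + es³], Δ_r = −108A_r²D_r² + 4A_rC_r(27B_rD_r − 8C_r²) − 9B_r²(3B_rD_r − C_r²), G_r = 768A_r³E_r − 64A_r²(3B_rD_r + 2C_r²) + 144A_rB_r²C_r − 27B_r⁴, H_r = 384A_r³E_r² − 8A_r²(24B_rD_rE_r + 16C_r²E_r − 9C_rD_r²) + A_r(144B_r²C_rE_r − 3B_r²D_r² − 40B_rC_r²D_r + 8C_r⁴) − B_r²(27B_r²E_r − 9B_rC_rD_r + 2C_r³), and K_r = 256A_r³E_r³ − 192A_r²B_rD_rE_r² − 128A_r²C_r²E_r² + 144A_r²C_rD_r²E_r − 27A_r²D_r⁴ + 144A_rB_r²C_rE_r² − 6A_rB_r²D_r²E_r − 80A_rB_rC_r²D_rE_r + 18A_rB_rC_rD_r³ + 16A_rC_r⁴E_r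 − 4A_rC_r³D_r² − 27B_r⁴E_r² + 18B_r³C_rD_rE_r − 4B_r³D_r³ − 4B_r²C_r³E_r + B_r²C_r²D_r². Then f(x) ≥ 0 for every x ∈ ℝⁿ if and only if both: (i) f(1_k, 0_{n−k}) ≥ 0 for every k ∈ {1,…,n}; and (ii) for every r ∈ {1,…,n−1}, either (K_r ≥ 0 and Δ_r < 0) or (G_r ≥ 0 and H_r ≥ 0 and K_r ≥ 0). -/

import Mathlib

open Finset

/-- The `k`-th power sum of `x ∈ ℝⁿ`. -/
noncomputable def powSum (n : ℕ) (k : ℕ) (x : Fin n → ℝ) : ℝ := ∑ i, x i ^ k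

/-- The symmetric quartic form with coefficients `a, b, c, d, e`. -/
noncomputable def quarticF (n : ℕ) (a b c d e : ℝ) (x : Fin n → ℝ) : ℝ :=
  a * powSum n 4 x + b * powSum n 3 x * powSum n 1 x + c * (powSum n 2 x) ^ 2
    + d * powSum n 2 x * (powSum n 1 x) ^ 2 + e * (powSum n 1 x) ^ 4

/-- The point `(1_k, 0_{n−k}) ∈ ℝⁿ`. -/
noncomputable def onesPt (n k : ℕ) : Fin n → ℝ := fun i => if (i : ℕ) < k then 1 else 0

noncomputable def cA (a b c d e : ℝ) (r : ℕ) : ℝ :=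
  (r : ℝ) * (a + (b + c) * (r : ℝ) + d * (r : ℝ) ^ 2 + e * (r : ℝ) ^ 3)

noncomputable def cB (b d e : ℝ) (r s : ℕ) : ℝ :=
  (r : ℝ) * (s : ℝ) * (b + 2 * d * (r : ℝ) + 4 * e * (r : ℝ) ^ 2)

noncomputable def cC (c d e : ℝ) (r s : ℕ) : ℝ :=
  (r : ℝ) * (s : ℝ) * (2 * c + d * ((r : ℝ) + (s : ℝ)) + 6 * e * (r : ℝ) * (s : ℝ))

noncomputable def cD (b d e : ℝ) (r s : ℕ) : ℝ :=
  (r : ℝ) * (s : ℝ) * (b + 2 * d * (s : ℝ) + 4 * e * (s : ℝ) ^ 2)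

noncomputable def cE (a b c d e : ℝ) (s : ℕ) : ℝ :=
  (s : ℝ) * (a + (b + c) * (s : ℝ) + d * (s : ℝ) ^ 2 + e * (s : ℝ) ^ 3)

/-- `Δ` of the quartic with coefficients `A B C D E` (discriminant of the derivative,
up to a positive factor). -/
noncomputable def qΔ (A B C D : ℝ) : ℝ :=
  -108 * A ^ 2 * D ^ 2 + 4 * A * C * (27 * B * D - 8 * C ^ 2)
    - 9 * B ^ 2 * (3 * B * D - C ^ 2)

noncomputable def qG (A B C D E : ℝ) : ℝ :=
  768 * A ^ 3 * E - 64 * A ^ 2 * (3 * B * D + 2 * C ^ 2) + 144 * A * B ^ 2 * C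
    - 27 * B ^ 4

noncomputable def qH (A B C D E : ℝ) : ℝ :=
  384 * A ^ 3 * E ^ 2 - 8 * A ^ 2 * (24 * B * D * E + 16 * C ^ 2 * E - 9 * C * D ^ 2)
    + A * (144 * B ^ 2 * C * E - 3 * B ^ 2 * D ^ 2 - 40 * B * C ^ 2 * D + 8 * C ^ 4)
    - B ^ 2 * (27 * B ^ 2 * E - 9 * B * C * D + 2 * C ^ 3)

noncomputable def qK (A B C D E : ℝ) : ℝ :=
  256 * A ^ 3 * E ^ 3 - 192 * A ^ 2 * B * D * E ^ 2 - 128 * A ^ 2 * C ^ 2 * E ^ 2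
    + 144 * A ^ 2 * C * D ^ 2 * E - 27 * A ^ 2 * D ^ 4 + 144 * A * B ^ 2 * C * E ^ 2
    - 6 * A * B ^ 2 * D ^ 2 * E - 80 * A * B * C ^ 2 * D * E + 18 * A * B * C * D ^ 3
    + 16 * A * C ^ 4 * E - 4 * A * C ^ 3 * D ^ 2 - 27 * B ^ 4 * E ^ 2
    + 18 * B ^ 3 * C * D * E - 4 * B ^ 3 * D ^ 3 - 4 * B ^ 2 * C ^ 3 * E
    + B ^ 2 * C ^ 2 * D ^ 2

/-! The form `f` is affine in `p₃` and `p₄` once `p₁` and `p₂` are fixed, and perturbing three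
distinct coordinates with `p₁` and `p₂` fixed changes it by a multiple of the change of their
product. On the compact set where `p₁` and `p₂` are prescribed, a minimizer of `f` with the largest
possible `p₃` therefore has at most two distinct coordinates, and it remains to decide
nonnegativity of binary quartics.

For a univariate quartic with `A > 0`, the sign of the discriminant `Δ` of the derivative tells
whether all critical points are real. If they are, `G`, `H`, `K` are positive multiples of the
elementary symmetric functions of the three critical values, which are nonnegative exactly when all
critical values are. If two critical points are complex conjugate, so are their critical values, and
`K` has the sign of the minimum. If `A = 0`, then `G ≥ 0` or `Δ < 0 ≤ K` forces `B = 0`. -/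

open Filter Topology Function

section BinaryQuartic

/-- The binary quartic form with coefficients `A, B, C, D, E`. Its value at `(t, 1)` is the
univariate quartic whose discriminants are `qΔ`, `qG`, `qH`, `qK`. -/
def binaryQuartic (A B C D E x y : ℝ) : ℝ :=
  A * x ^ 4 + B * x ^ 3 * y + C * x ^ 2 * y ^ 2 + D * x * y ^ 3 + E * y ^ 4

/-- The discriminant test for nonnegativity of the univariate quartic with coefficients
`A, B, C, D, E`. -/
def DiscriminantCriterion (A B C D E : ℝ) : Prop :=
  (0 ≤ qK A B C D E ∧ qΔ A B C D < 0) ∨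
    (0 ≤ qG A B C D E ∧ 0 ≤ qH A B C D E ∧ 0 ≤ qK A B C D E)

variable {A B C D E : ℝ}

lemma binaryQuartic_swap (x y : ℝ) : binaryQuartic E D C B A y x = binaryQuartic A B C D E x y := by
  unfold binaryQuartic
  ring

lemma binaryQuartic_eq_pow_mul {y : ℝ} (hy : y ≠ 0) (x : ℝ) :
    binaryQuartic A B C D E x y = y ^ 4 * binaryQuartic A B C D E (x / y) 1 := by
  unfold binaryQuartic
  field_simp

lemma binaryQuartic_nonneg_of_univariate (hA : 0 ≤ A)
    (h : ∀ t, 0 ≤ binaryQuartic A B C D E t 1) (x y : ℝ) : 0 ≤ binaryQuartic A B C D E x y := by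
  rcases eq_or_ne y 0 with rfl | hy
  · calc 0 ≤ A * x ^ 4 := by positivity
      _ = binaryQuartic A B C D E x 0 := by simp [binaryQuartic]
  · rw [binaryQuartic_eq_pow_mul hy]
    exact mul_nonneg (by positivity) (h _)

lemma tendsto_binaryQuartic_cocompact (hA : 0 < A) :
    Tendsto (fun t ↦ binaryQuartic A B C D E t 1) (cocompact ℝ) atTop := by
  have hpow : Tendsto (fun t : ℝ ↦ t ^ 4) (cocompact ℝ) atTop := by
    simpa only [Function.comp_def, Real.norm_eq_abs, (by decide : Even 4).pow_abs] using
      (tendsto_pow_atTop four_ne_zero).comp (tendsto_norm_cocompact_atTop (E := ℝ))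
  have hcont : Continuous fun t ↦ binaryQuartic A B C D E 1 t := by
    unfold binaryQuartic
    fun_prop
  have hlead : Tendsto (fun t ↦ binaryQuartic A B C D E 1 t⁻¹) (cocompact ℝ) (𝓝 A) := by
    have hinv : Tendsto Inv.inv (cocompact ℝ) (𝓝 0) := by
      simpa only [Metric.cobounded_eq_cocompact] using tendsto_inv₀_cobounded (α := ℝ)
    simpa [binaryQuartic, Function.comp_def] using (hcont.tendsto 0).comp hinv
  refine (hpow.atTop_mul_pos hA hlead).congr' ?_
  filter_upwards [(isCompact_singleton (x := (0 : ℝ))).compl_mem_cocompact] with t ht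
  rw [← binaryQuartic_swap t 1, binaryQuartic_eq_pow_mul ht, one_div, binaryQuartic_swap]

lemma exists_forall_binaryQuartic_le (hA : 0 < A) (B C D E : ℝ) :
    ∃ m, ∀ t, binaryQuartic A B C D E m 1 ≤ binaryQuartic A B C D E t 1 := by
  refine Continuous.exists_forall_le ?_ (tendsto_binaryQuartic_cocompact hA)
  unfold binaryQuartic
  fun_prop

lemma linear_coeff_eq_zero_of_forall_le (h : ∀ t, E ≤ binaryQuartic A B C D E t 1) : D = 0 := by
  have hmin : IsLocalMin (fun t : ℝ ↦ D * t + t ^ 2 * (A * t ^ 2 + B * t + C) + E) 0 :=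
    Eventually.of_forall fun t ↦ by
      have := h t
      unfold binaryQuartic at this
      linarith
  have hderiv : HasDerivAt (fun t : ℝ ↦ D * t + t ^ 2 * (A * t ^ 2 + B * t + C) + E) D 0 := by
    have hrest : DifferentiableAt ℝ (fun t : ℝ ↦ A * t ^ 2 + B * t + C) 0 := by fun_prop
    have := (((hasDerivAt_id' (0 : ℝ)).const_mul D).add
      ((hasDerivAt_pow 2 (0 : ℝ)).mul hrest.hasDerivAt)).add_const E
    simpa using this
  exact hmin.hasDerivAt_eq_zero hderiv

lemma binaryQuartic_translate (m t : ℝ) :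
    binaryQuartic A (4 * A * m + B) (6 * A * m ^ 2 + 3 * B * m + C)
      (4 * A * m ^ 3 + 3 * B * m ^ 2 + 2 * C * m + D) (binaryQuartic A B C D E m 1) t 1
      = binaryQuartic A B C D E (t + m) 1 := by
  unfold binaryQuartic
  ring

lemma discriminantCriterion_translate (m : ℝ) :
    DiscriminantCriterion A (4 * A * m + B) (6 * A * m ^ 2 + 3 * B * m + C)
      (4 * A * m ^ 3 + 3 * B * m ^ 2 + 2 * C * m + D) (binaryQuartic A B C D E m 1)
      ↔ DiscriminantCriterion A B C D E := by
  unfold DiscriminantCriterion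
  congr! 3
  on_goal 4 => congr! 1
  all_goals simp only [qK, qΔ, qG, qH, binaryQuartic]; ring_nf

lemma discriminants_eq_of_critical_points (x y z : ℝ) (hB : B = -(4 / 3) * A * (x + y + z))
    (hC : C = 2 * A * (x * y + y * z + z * x)) (hD : D = -4 * A * (x * y * z)) :
    let f := fun t ↦ binaryQuartic A B C D E t 1
    qG A B C D E = 256 * A ^ 3 * (f x + f y + f z) ∧
    qH A B C D E = 128 * A ^ 3 * (f x * f y + f y * f z + f z * f x) ∧
    qK A B C D E = 256 * A ^ 3 * (f x * f y * f z) := by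
  subst hB hC hD
  simp only [qG, qH, qK, binaryQuartic]
  exact ⟨by ring, by ring, by ring⟩

lemma nonneg_of_esymm_nonneg {x y z : ℝ} (h₁ : 0 ≤ x + y + z)
    (h₂ : 0 ≤ x * y + y * z + z * x) (h₃ : 0 ≤ x * y * z) : 0 ≤ x := by
  by_contra! hx
  have hroot : x ^ 3 + (x * y + y * z + z * x) * x = (x + y + z) * x ^ 2 + x * y * z := by ring
  have hcube : x ^ 3 < 0 := Odd.pow_neg (by decide) hx
  have hlin : (x * y + y * z + z * x) * x ≤ 0 := mul_nonpos_of_nonneg_of_nonpos h₂ hx.le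
  have hsq : 0 ≤ (x + y + z) * x ^ 2 := by positivity
  exact hroot.not_lt (by linarith)

lemma exists_roots_of_discrim_nonneg {a b c : ℝ} (ha : a ≠ 0) (h : 0 ≤ discrim a b c) :
    ∃ y z, b = -a * (y + z) ∧ c = a * (y * z) := by
  obtain ⟨y, hy⟩ := exists_quadratic_eq_zero ha ⟨√(discrim a b c), (Real.mul_self_sqrt h).symm⟩
  refine ⟨y, -b / a - y, by field_simp; ring, ?_⟩
  field_simp
  linarith

lemma qΔ_eq_sq_mul_discrim : qΔ A B C 0 = C ^ 2 * discrim (4 * A) (3 * B) (2 * C) := by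
  unfold qΔ discrim
  ring

lemma discriminantCriterion_iff_of_discrim_nonneg (hA : 0 < A)
    (hdisc : 0 ≤ discrim (4 * A) (3 * B) (2 * C))
    (hmin : ∀ t, E ≤ binaryQuartic A B C 0 E t 1) :
    DiscriminantCriterion A B C 0 E ↔ 0 ≤ E := by
  obtain ⟨y, z, hB, hC⟩ := exists_roots_of_discrim_nonneg (by positivity : 4 * A ≠ 0) hdisc
  obtain ⟨hG, hH, hK⟩ := discriminants_eq_of_critical_points (A := A) (B := B) (C := C) (D := 0)
    (E := E) 0 y z (by linarith) (by linarith) (by ring)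
  have hE : binaryQuartic A B C 0 E 0 1 = E := by simp [binaryQuartic]
  simp only [hE] at hG hH hK
  rw [DiscriminantCriterion, hG, hH, hK, qΔ_eq_sq_mul_discrim]
  constructor
  · rintro (⟨-, hΔ⟩ | ⟨hG, hH, hK⟩)
    · exact absurd hΔ (mul_nonneg (sq_nonneg C) hdisc).not_gt
    · exact nonneg_of_esymm_nonneg (nonneg_of_mul_nonneg_right hG (by positivity))
        (nonneg_of_mul_nonneg_right hH (by positivity))
        (nonneg_of_mul_nonneg_right hK (by positivity))
  · intro hE
    have hy := hE.trans (hmin y)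
    have hz := hE.trans (hmin z)
    exact Or.inr ⟨by positivity, by positivity, by positivity⟩

/- The second factor is proportional to the product of the critical values at the two nonzero
critical points, with the square completed in `E`. -/
lemma qK_eq_mul_add_sq :
    4 * 256 * A ^ 3 * qK A B C 0 E = E * ((512 * A ^ 3 * E + (144 * A * B ^ 2 * C
      - 128 * A ^ 2 * C ^ 2 - 27 * B ^ 4)) ^ 2
      - B ^ 2 * discrim (4 * A) (3 * B) (2 * C) ^ 3) := by
  unfold qK discrim
  ring

lemma qK_nonneg_iff_of_discrim_neg (hA : 0 < A) (hC : C ≠ 0)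
    (hdisc : discrim (4 * A) (3 * B) (2 * C) < 0) : 0 ≤ qK A B C 0 E ↔ 0 ≤ E := by
  rw [← mul_nonneg_iff_of_pos_left (by positivity : 0 < 4 * 256 * A ^ 3), qK_eq_mul_add_sq]
  set Q := 512 * A ^ 3 * E + (144 * A * B ^ 2 * C - 128 * A ^ 2 * C ^ 2 - 27 * B ^ 4) with hQ
  have hcube : discrim (4 * A) (3 * B) (2 * C) ^ 3 < 0 := Odd.pow_neg (by decide) hdisc
  refine ⟨fun h ↦ ?_, fun hE ↦ mul_nonneg hE ?_⟩
  · by_contra! hE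
    refine (mul_neg_of_neg_of_pos hE ?_).not_ge h
    rcases eq_or_ne B 0 with hB | hB
    · have hQneg : Q < 0 := by
        have hlead : A ^ 3 * E < 0 := mul_neg_of_pos_of_neg (by positivity) hE
        have hsq : 0 < A ^ 2 * C ^ 2 := by positivity
        rw [hQ, hB]
        linarith
      calc 0 < Q ^ 2 := sq_pos_of_neg hQneg
        _ = Q ^ 2 - B ^ 2 * discrim (4 * A) (3 * B) (2 * C) ^ 3 := by simp [hB]
    · have : B ^ 2 * discrim (4 * A) (3 * B) (2 * C) ^ 3 < 0 :=
        mul_neg_of_pos_of_neg (by positivity) hcube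
      linarith [sq_nonneg Q]
  · have : B ^ 2 * discrim (4 * A) (3 * B) (2 * C) ^ 3 ≤ 0 :=
      mul_nonpos_of_nonneg_of_nonpos (sq_nonneg B) hcube.le
    linarith [sq_nonneg Q]

lemma discriminantCriterion_iff_of_discrim_neg (hA : 0 < A)
    (hdisc : discrim (4 * A) (3 * B) (2 * C) < 0) :
    DiscriminantCriterion A B C 0 E ↔ 0 ≤ E := by
  have hC : C ≠ 0 := by
    rintro rfl
    rw [discrim] at hdisc
    linarith [sq_nonneg (3 * B)]
  have hΔ : qΔ A B C 0 < 0 := by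
    rw [qΔ_eq_sq_mul_discrim]
    exact mul_neg_of_pos_of_neg (by positivity) hdisc
  rw [← qK_nonneg_iff_of_discrim_neg hA hC hdisc]
  exact ⟨fun h ↦ h.elim And.left (·.2.2), fun h ↦ Or.inl ⟨h, hΔ⟩⟩

lemma forall_binaryQuartic_nonneg_iff_of_pos (hA : 0 < A) :
    (∀ x y, 0 ≤ binaryQuartic A B C D E x y) ↔ DiscriminantCriterion A B C D E := by
  obtain ⟨m, hm⟩ := exists_forall_binaryQuartic_le hA B C D E
  have hmin : ∀ t, binaryQuartic A B C D E m 1 ≤ binaryQuartic A (4 * A * m + B)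
      (6 * A * m ^ 2 + 3 * B * m + C) (4 * A * m ^ 3 + 3 * B * m ^ 2 + 2 * C * m + D)
      (binaryQuartic A B C D E m 1) t 1 := fun t ↦ by
    rw [binaryQuartic_translate]
    exact hm _
  have hcrit := linear_coeff_eq_zero_of_forall_le hmin
  rw [← discriminantCriterion_translate m, hcrit]
  rw [hcrit] at hmin
  calc (∀ x y, 0 ≤ binaryQuartic A B C D E x y) ↔ 0 ≤ binaryQuartic A B C D E m 1 :=
        ⟨fun h ↦ h m 1, fun h ↦ binaryQuartic_nonneg_of_univariate hA.le fun t ↦ h.trans (hm t)⟩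
    _ ↔ _ := (le_or_gt 0 (discrim _ _ _)).elim
        (fun h ↦ (discriminantCriterion_iff_of_discrim_nonneg hA h hmin).symm)
        (fun h ↦ (discriminantCriterion_iff_of_discrim_neg hA h).symm)

lemma discriminantCriterion_zero_zero (C D E : ℝ) : DiscriminantCriterion 0 0 C D E :=
  Or.inr ⟨by simp [qG], by simp [qH], by simp [qK]⟩

lemma DiscriminantCriterion.cubic_coeff_eq_zero (h : DiscriminantCriterion 0 B C D E) :
    B = 0 := by
  by_contra hB
  rcases h with ⟨hK, hΔ⟩ | ⟨hG, -, -⟩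
  · have hpos : 0 < 3 * B * D - C ^ 2 := by
      have : qΔ 0 B C D = -(9 * B ^ 2 * (3 * B * D - C ^ 2)) := by
        unfold qΔ
        ring
      rw [this, neg_lt_zero] at hΔ
      exact pos_of_mul_pos_right hΔ (by positivity)
    have hcubic : 27 * qK 0 B C D E = -(4 * (3 * B * D - C ^ 2) ^ 3
        + (27 * B ^ 2 * E - 9 * B * C * D + 2 * C ^ 3) ^ 2) := by
      unfold qK
      ring
    have : 0 < 4 * (3 * B * D - C ^ 2) ^ 3
        + (27 * B ^ 2 * E - 9 * B * C * D + 2 * C ^ 3) ^ 2 := by positivity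
    linarith
  · have : qG 0 B C D E = -(27 * B ^ 4) := by
      unfold qG
      ring
    have : 0 < 27 * B ^ 4 := by positivity
    linarith

lemma discriminantCriterion_of_forall_nonneg (h : ∀ x y, 0 ≤ binaryQuartic A B C D E x y) :
    DiscriminantCriterion A B C D E := by
  have hA : 0 ≤ A := by simpa [binaryQuartic] using h 1 0
  rcases hA.eq_or_lt with rfl | hA
  · obtain rfl : B = 0 := linear_coeff_eq_zero_of_forall_le (A := E) (B := D) (C := C) (E := 0)
      fun t ↦ by simpa only [binaryQuartic_swap] using h 1 t
    exact discriminantCriterion_zero_zero C D E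
  · exact (forall_binaryQuartic_nonneg_iff_of_pos hA).1 h

theorem forall_binaryQuartic_nonneg_iff :
    (∀ x y, 0 ≤ binaryQuartic A B C D E x y) ↔
      0 ≤ A ∧ 0 ≤ E ∧ 0 ≤ A + B + C + D + E ∧
        DiscriminantCriterion A B C D E ∧ DiscriminantCriterion E D C B A := by
  constructor
  · intro h
    have hswap : ∀ x y, 0 ≤ binaryQuartic E D C B A x y := fun x y ↦ by
      rw [binaryQuartic_swap]
      exact h y x
    exact ⟨by simpa [binaryQuartic] using h 1 0, by simpa [binaryQuartic] using h 0 1,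
      by simpa [binaryQuartic] using h 1 1, discriminantCriterion_of_forall_nonneg h,
      discriminantCriterion_of_forall_nonneg hswap⟩
  · rintro ⟨hA, hE, hsum, hcrit, hcrit'⟩ x y
    rcases hA.eq_or_lt with rfl | hA
    · rcases hE.eq_or_lt with rfl | hE
      · obtain rfl := hcrit.cubic_coeff_eq_zero
        obtain rfl := hcrit'.cubic_coeff_eq_zero
        have hC : 0 ≤ C := by linarith
        calc 0 ≤ C * x ^ 2 * y ^ 2 := by positivity
          _ = binaryQuartic 0 0 C 0 0 x y := by simp [binaryQuartic]
      · rw [← binaryQuartic_swap]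
        exact (forall_binaryQuartic_nonneg_iff_of_pos hE).2 hcrit' y x
    · exact (forall_binaryQuartic_nonneg_iff_of_pos hA).2 hcrit x y

end BinaryQuartic

section HalfDegree

lemma hasDerivAt_circle (m p q : ℝ) :
    HasDerivAt (fun θ ↦ m + Real.cos θ * (p - m) + Real.sin θ * q) q 0 := by
  simpa using (((Real.hasDerivAt_cos 0).mul_const (p - m)).const_add m).fun_add
    ((Real.hasDerivAt_sin 0).mul_const q)

/- Fixing the sum and the sum of squares confines `(u, v, w)` to a circle about the diagonal; along
it the product has velocity proportional to the Vandermonde determinant. -/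
lemma exists_mul_prod_lt {u v w σ : ℝ} (huv : u ≠ v) (huw : u ≠ w) (hvw : v ≠ w) (hσ : σ ≠ 0) :
    ∃ u' v' w', u' + v' + w' = u + v + w ∧ u' ^ 2 + v' ^ 2 + w' ^ 2 = u ^ 2 + v ^ 2 + w ^ 2 ∧
      σ * (u * v * w) < σ * (u' * v' * w') := by
  let γ (p q θ : ℝ) : ℝ :=
    (u + v + w) / 3 + Real.cos θ * (p - (u + v + w) / 3) + Real.sin θ * (q / √3)
  have hγ₀ (p q : ℝ) : γ p q 0 = p := by simp [γ]
  have hsum (θ : ℝ) : γ u (v - w) θ + γ v (w - u) θ + γ w (u - v) θ = u + v + w := by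
    simp only [γ]
    ring
  have hsq (θ : ℝ) : γ u (v - w) θ ^ 2 + γ v (w - u) θ ^ 2 + γ w (u - v) θ ^ 2
      = u ^ 2 + v ^ 2 + w ^ 2 := by
    have h3 : (√3 : ℝ) ^ 2 = 3 := Real.sq_sqrt (by norm_num)
    have hcos := Real.cos_sq' θ
    simp only [γ]
    field_simp
    simp only [h3]
    ring_nf
    simp only [h3, hcos]
    ring
  by_contra! h
  have hmax : IsLocalMax (fun θ ↦ σ * (γ u (v - w) θ * γ v (w - u) θ * γ w (u - v) θ)) 0 :=
    Eventually.of_forall fun θ ↦ by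
      simpa only [hγ₀] using h _ _ _ (hsum θ) (hsq θ)
  have hγ' (p q : ℝ) : HasDerivAt (γ p q) (q / √3) 0 := hasDerivAt_circle _ p _
  have hderiv := (((hγ' u (v - w)).fun_mul (hγ' v (w - u))).fun_mul (hγ' w (u - v))).const_mul σ
  have hzero := hmax.hasDerivAt_eq_zero hderiv
  have : σ * ((u - v) * (u - w) * (v - w)) / √3 = 0 := by
    rw [← hzero, hγ₀, hγ₀, hγ₀]
    ring
  simp [hσ, sub_ne_zero.2 huv, sub_ne_zero.2 huw, sub_ne_zero.2 hvw] at this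

lemma sum_comp_update {ι α M : Type*} [Fintype ι] [DecidableEq ι] [AddCommGroup M]
    (g : α → M) (x : ι → α) (i : ι) (a : α) :
    ∑ m, g (update x i a m) = ∑ m, g (x m) + (g a - g (x i)) := by
  have hrest : ∑ m ∈ univ.erase i, g (update x i a m) = ∑ m ∈ univ.erase i, g (x m) :=
    sum_congr rfl fun m hm ↦ by rw [update_of_ne (ne_of_mem_erase hm)]
  rw [← add_sum_erase _ _ (mem_univ i), ← add_sum_erase _ (fun m ↦ g (x m)) (mem_univ i), hrest,
    update_self]
  abel

variable {ι : Type*} [Fintype ι]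

lemma exists_powerSums_perturb (x : ι → ℝ) {i j k : ι} (hij : x i ≠ x j)
    (hik : x i ≠ x k) (hjk : x j ≠ x k) {σ : ℝ} (hσ : σ ≠ 0) :
    ∃ (y : ι → ℝ) (δ : ℝ), 0 < σ * δ ∧ ∑ m, y m = ∑ m, x m ∧ ∑ m, y m ^ 2 = ∑ m, x m ^ 2 ∧
      ∑ m, y m ^ 3 = ∑ m, x m ^ 3 + 3 * δ ∧
      ∑ m, y m ^ 4 = ∑ m, x m ^ 4 + 4 * (x i + x j + x k) * δ := by
  classical
  obtain ⟨u, v, w, h₁, h₂, h₃⟩ := exists_mul_prod_lt hij hik hjk hσ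
  have hsum (g : ℝ → ℝ) : ∑ m, g (update (update (update x i u) j v) k w m)
      = ∑ m, g (x m) + (g u + g v + g w - (g (x i) + g (x j) + g (x k))) := by
    have hji : j ≠ i := fun h ↦ hij (h ▸ rfl)
    have hki : k ≠ i := fun h ↦ hik (h ▸ rfl)
    have hkj : k ≠ j := fun h ↦ hjk (h ▸ rfl)
    simp only [sum_comp_update, update_of_ne hji, update_of_ne hki, update_of_ne hkj]
    ring
  have he₂ : u * v + v * w + w * u = x i * x j + x j * x k + x k * x i := by
    linear_combination (u + v + w + x i + x j + x k) / 2 * h₁ - h₂ / 2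
  refine ⟨update (update (update x i u) j v) k w, u * v * w - x i * x j * x k,
    by linarith, ?_, ?_, ?_, ?_⟩
  · rw [hsum fun t ↦ t, h₁, sub_self, add_zero]
  · rw [hsum (· ^ 2), h₂, sub_self, add_zero]
  · rw [hsum (· ^ 3)]
    linear_combination (u + v + w) * h₂ - (u + v + w) * he₂ +
      ((x i) ^ 2 + (x j) ^ 2 + (x k) ^ 2 - (x i * x j + x j * x k + x k * x i)) * h₁
  · rw [hsum (· ^ 4)]
    linear_combination (u ^ 2 + v ^ 2 + w ^ 2 + x i ^ 2 + x j ^ 2 + x k ^ 2) * h₂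
      - 2 * (u * v + v * w + w * u + x i * x j + x j * x k + x k * x i) * he₂
      + 4 * u * v * w * h₁

lemma isCompact_setOf_sum_sq_eq (t : ℝ) : IsCompact {x : ι → ℝ | ∑ i, x i ^ 2 = t} := by
  refine Metric.isCompact_of_isClosed_isBounded
    (isClosed_eq (by fun_prop) continuous_const) ?_
  refine Metric.isBounded_closedBall (x := 0) (r := √t) |>.subset ?_
  rintro x rfl
  rw [mem_closedBall_zero_iff, pi_norm_le_iff_of_nonneg (Real.sqrt_nonneg _)]
  exact fun i ↦ Real.abs_le_sqrt (single_le_sum (fun j _ ↦ sq_nonneg (x j)) (mem_univ i))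

lemma exists_isMinOn_forall_le_of_isCompact {X : Type*} [TopologicalSpace X] {s : Set X}
    (hs : IsCompact s) (hne : s.Nonempty) {f g : X → ℝ} (hf : Continuous f) (hg : Continuous g) :
    ∃ x ∈ s, IsMinOn f s x ∧ ∀ y ∈ s, f y = f x → g y ≤ g x := by
  obtain ⟨x₁, hx₁, hmin⟩ := hs.exists_isMinOn hne hf.continuousOn
  obtain ⟨x, ⟨hx, hfx⟩, hmax⟩ := (hs.inter_right (isClosed_eq hf continuous_const)).exists_isMaxOn
    ⟨x₁, hx₁, rfl⟩ hg.continuousOn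
  exact ⟨x, hx, fun y hy ↦ hfx.trans_le (hmin hy), fun y hy hfy ↦ hmax ⟨hy, hfy.trans hfx⟩⟩

lemma exists_forall_eq_or_eq {κ α : Type*} [Nonempty α] (x : κ → α)
    (h : ∀ i j k, x i = x j ∨ x i = x k ∨ x j = x k) : ∃ u v, ∀ i, x i = u ∨ x i = v := by
  by_contra! hx
  obtain ⟨u⟩ := ‹Nonempty α›
  obtain ⟨i, -⟩ := hx u u
  obtain ⟨j, hj, -⟩ := hx (x i) (x i)
  obtain ⟨k, hki, hkj⟩ := hx (x i) (x j)
  grind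

theorem exists_two_valued_powerSums_le (α β : ℝ) (x₀ : ι → ℝ) :
    ∃ x : ι → ℝ, ∑ i, x i = ∑ i, x₀ i ∧ ∑ i, x i ^ 2 = ∑ i, x₀ i ^ 2 ∧
      α * ∑ i, x i ^ 4 + β * ∑ i, x i ^ 3 ≤ α * ∑ i, x₀ i ^ 4 + β * ∑ i, x₀ i ^ 3 ∧
      ∃ u v, ∀ i, x i = u ∨ x i = v := by
  have hcompact : IsCompact {x : ι → ℝ | ∑ i, x i ^ 2 = ∑ i, x₀ i ^ 2 ∧ ∑ i, x i = ∑ i, x₀ i} :=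
    (isCompact_setOf_sum_sq_eq _).inter_right (isClosed_eq (by fun_prop) continuous_const)
  obtain ⟨x, ⟨hx₂, hx₁⟩, hmin, hmax⟩ := exists_isMinOn_forall_le_of_isCompact hcompact
    ⟨x₀, rfl, rfl⟩ (f := fun x ↦ α * ∑ i, x i ^ 4 + β * ∑ i, x i ^ 3) (g := fun x ↦ ∑ i, x i ^ 3)
    (by fun_prop) (by fun_prop)
  refine ⟨x, hx₁, hx₂, hmin ⟨rfl, rfl⟩, exists_forall_eq_or_eq x fun i j k ↦ ?_⟩
  by_contra! hdistinct
  obtain ⟨hij, hik, hjk⟩ := hdistinct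
  set slope := 4 * α * (x i + x j + x k) + 3 * β with hslope
  have hperturb {σ : ℝ} (hσ : σ ≠ 0) : ∃ (y : ι → ℝ) (δ : ℝ), 0 < σ * δ ∧
      (∑ m, y m ^ 2 = ∑ m, x₀ m ^ 2 ∧ ∑ m, y m = ∑ m, x₀ m) ∧
      ∑ m, y m ^ 3 = ∑ m, x m ^ 3 + 3 * δ ∧
      α * ∑ m, y m ^ 4 + β * ∑ m, y m ^ 3
        = α * ∑ m, x m ^ 4 + β * ∑ m, x m ^ 3 + slope * δ := by
    obtain ⟨y, δ, hδ, h₁, h₂, h₃, h₄⟩ := exists_powerSums_perturb x hij hik hjk hσ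
    exact ⟨y, δ, hδ, ⟨h₂.trans hx₂, h₁.trans hx₁⟩, h₃, by rw [h₃, h₄, hslope]; ring⟩
  rcases eq_or_ne slope 0 with hslope₀ | hslope₀
  · obtain ⟨y, δ, hδ, hy, h₃, hf⟩ := hperturb one_ne_zero
    have := hmax y hy (by rw [hf, hslope₀, zero_mul, add_zero])
    linarith
  · obtain ⟨y, δ, hδ, hy, -, hf⟩ := hperturb (neg_ne_zero.2 hslope₀)
    have := isMinOn_iff.1 hmin y hy
    linarith

end HalfDegree

section Blocks

/-- The value of the quartic form at a vector with `r` coordinates `x` and `s` coordinates `y`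
(see `quarticF_ite`). -/
noncomputable def blockForm (a b c d e : ℝ) (r s : ℕ) (x y : ℝ) : ℝ :=
  binaryQuartic (cA a b c d e r) (cB b d e r s) (cC c d e r s) (cD b d e r s) (cE a b c d e s) x y

/-- The discriminant test for the univariate quartic `t ↦ f(t·1_r, 1_s)`. -/
def BlockCriterion (a b c d e : ℝ) (r s : ℕ) : Prop :=
  DiscriminantCriterion (cA a b c d e r) (cB b d e r s) (cC c d e r s) (cD b d e r s)
    (cE a b c d e s)

variable {n : ℕ} {a b c d e : ℝ}

lemma powSum_ite (k : ℕ) (p : Fin n → Prop) [DecidablePred p] (x y : ℝ) :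
    powSum n k (fun i ↦ if p i then x else y)
      = #{i | p i} * x ^ k + (n - #{i | p i} : ℕ) * y ^ k := by
  have hcard : #{i | ¬p i} = n - #{i | p i} := by
    rw [filter_not, card_sdiff_of_subset (filter_subset _ _), card_univ, Fintype.card_fin]
  simp only [powSum, apply_ite (· ^ k), sum_ite, sum_const, nsmul_eq_mul, hcard]

lemma quarticF_ite (p : Fin n → Prop) [DecidablePred p] (x y : ℝ) :
    quarticF n a b c d e (fun i ↦ if p i then x else y)
      = blockForm a b c d e #{i | p i} (n - #{i | p i}) x y := by
  simp only [quarticF, powSum_ite, blockForm, binaryQuartic, cA, cB, cC, cD, cE]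
  ring

lemma quarticF_ite_lt {r : ℕ} (hr : r ≤ n) (x y : ℝ) :
    quarticF n a b c d e (fun i ↦ if (i : ℕ) < r then x else y)
      = blockForm a b c d e r (n - r) x y := by
  rw [quarticF_ite, Fin.card_filter_val_lt, min_eq_right hr]

lemma quarticF_onesPt {k : ℕ} (hk : k ≤ n) :
    quarticF n a b c d e (onesPt n k) = cA a b c d e k := by
  unfold onesPt
  simp [quarticF_ite_lt hk, blockForm, binaryQuartic]

theorem forall_quarticF_nonneg_iff :
    (∀ x, 0 ≤ quarticF n a b c d e x) ↔
      ∀ r ≤ n, ∀ x y, 0 ≤ blockForm a b c d e r (n - r) x y := by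
  refine ⟨fun h r hr x y ↦ (h _).trans_eq (quarticF_ite_lt hr x y), fun h x₀ ↦ ?_⟩
  obtain ⟨x, h₁, h₂, hle, u, v, huv⟩ :=
    exists_two_valued_powerSums_le a (b * powSum n 1 x₀) x₀
  have hx : x = fun i ↦ if x i = u then u else v := by
    ext i
    split_ifs with hi
    exacts [hi, (huv i).resolve_left hi]
  calc 0 ≤ quarticF n a b c d e x := by
        rw [hx, quarticF_ite]
        exact h _ (card_le_univ _ |>.trans_eq (Fintype.card_fin n)) u v
    _ ≤ quarticF n a b c d e x₀ := by
        simp only [quarticF, powSum, pow_one, h₁, h₂] at hle ⊢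
        linarith

theorem forall_blockForm_nonneg_iff {r s : ℕ} :
    (∀ x y, 0 ≤ blockForm a b c d e r s x y) ↔
      0 ≤ cA a b c d e r ∧ 0 ≤ cA a b c d e s ∧ 0 ≤ cA a b c d e (r + s) ∧
        BlockCriterion a b c d e r s ∧ BlockCriterion a b c d e s r := by
  have hsum : cA a b c d e r + cB b d e r s + cC c d e r s + cD b d e r s + cA a b c d e s
      = cA a b c d e (r + s) := by
    simp only [cA, cB, cC, cD, Nat.cast_add]
    ring
  have hC : cC c d e s r = cC c d e r s := by
    unfold cC
    ring
  have hB : cB b d e s r = cD b d e r s := by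
    unfold cB cD
    ring
  have hD : cD b d e s r = cB b d e r s := by
    unfold cB cD
    ring
  have hE (k : ℕ) : cE a b c d e k = cA a b c d e k := rfl
  simp only [blockForm, forall_binaryQuartic_nonneg_iff, BlockCriterion, hE, hsum, hB, hC, hD]

lemma blockCriterion_zero_left (s : ℕ) : BlockCriterion a b c d e 0 s := by
  simpa [BlockCriterion, cA, cB] using discriminantCriterion_zero_zero _ _ _

lemma blockCriterion_zero_right (r : ℕ) : BlockCriterion a b c d e r 0 := by
  simp [BlockCriterion, DiscriminantCriterion, cB, cC, cD, cE, qG, qH, qK]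

end Blocks

/-- Explicit discriminants deciding nonnegativity of a symmetric quartic on all of
`ℝⁿ` (the `QE4` algorithm). -/
theorem quartic_global_discriminants (n : ℕ) (hn : 2 ≤ n) (a b c d e : ℝ) :
    (∀ x : Fin n → ℝ, quarticF n a b c d e x ≥ 0) ↔
    ((∀ k : ℕ, 1 ≤ k → k ≤ n → quarticF n a b c d e (onesPt n k) ≥ 0) ∧
     (∀ r : ℕ, 1 ≤ r → r ≤ n - 1 →
       let s := n - r
       let A := cA a b c d e r
       let B := cB b d e r s
       let C := cC c d e r s
       let D := cD b d e r s
       let E := cE a b c d e s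
       (0 ≤ qK A B C D E ∧ qΔ A B C D < 0) ∨
       (0 ≤ qG A B C D E ∧ 0 ≤ qH A B C D E ∧ 0 ≤ qK A B C D E))) := by
  constructor
  · intro hf
    have hblock := forall_quarticF_nonneg_iff.1 hf
    exact ⟨fun k _ _ ↦ hf _, fun r _ hr ↦
      (forall_blockForm_nonneg_iff.1 (hblock r (by lia))).2.2.2.1⟩
  · rintro ⟨hones, hcrit⟩
    have hA : ∀ k ≤ n, 0 ≤ cA a b c d e k := fun k hk ↦ by
      rcases k.eq_zero_or_pos with rfl | hpos
      · simp [cA]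
      · exact quarticF_onesPt hk ▸ hones k hpos hk
    have hblock : ∀ r ≤ n, BlockCriterion a b c d e r (n - r) := fun r hr ↦ by
      rcases r.eq_zero_or_pos with rfl | hpos
      · exact blockCriterion_zero_left _
      · rcases hr.eq_or_lt with rfl | hlt
        · simpa using blockCriterion_zero_right r
        · exact hcrit r hpos (by lia)
    refine forall_quarticF_nonneg_iff.2 fun r hr ↦ forall_blockForm_nonneg_iff.2
      ⟨hA r hr, hA _ (n.sub_le r), ?_, hblock r hr, ?_⟩
    · simpa [hr] using hA n le_rfl
    · simpa [Nat.sub_sub_self hr] using hblock (n - r) (n.sub_le r)
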